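/- Let θ ∈ S^{d−1} and μ, ν ∈ P_2(ℝ^d) with ν supported on the line ℝθ. Then: (i) for any γ ∈ Π(ν, μ), ∫ ‖x−y‖² dγ(y,x) = ∫ (θ·(x−y))² dγ(y,x) + ∫ ‖Q_{θ⊥} x‖² dμ(x), where Q_{θ⊥} := Id − Q_θ; (ii) W_2²(ν, μ) = W_2²(P_θ#ν, P_θ#μ) + ∫ ‖Q_{θ⊥} x‖² dμ(x); (iii) Π*(ν, μ) = { γ ∈ Π(ν, μ) : (P_θ, P_θ)#γ = (F_{P_θ#ν}^{[-1]}, F_{P_θ#μ}^{[-1]})#L_{[0,1]} }, where L_{[0,1]} is Lebesgue measure on [0,1]. -/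

import Mathlib

open MeasureTheory Filter Topology ProbabilityTheory
open scoped ENNReal RealInnerProductSpace Classical

noncomputable section

/-- Euclidean space ℝ^d. -/
abbrev Euc (d : ℕ) : Type := EuclideanSpace ℝ (Fin d)

/-- `P2` : Borel probability measures with finite second moment. -/
def P2 {E : Type*} [NormedAddCommGroup E] [MeasurableSpace E] : Set (Measure E) :=
  {μ | IsProbabilityMeasure μ ∧ Integrable (fun x => ‖x‖ ^ 2) μ}

/-- Couplings between two measures. -/
def Coupling {E F : Type*} [MeasurableSpace E] [MeasurableSpace F]
    (μ : Measure E) (ν : Measure F) : Set (Measure (E × F)) :=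
  {π | IsProbabilityMeasure π ∧ π.map Prod.fst = μ ∧ π.map Prod.snd = ν}

/-- Quadratic transport cost of a plan. -/
def tCost {E : Type*} [NormedAddCommGroup E] [MeasurableSpace E]
    (π : Measure (E × E)) : ℝ :=
  ∫ p, ‖p.1 - p.2‖ ^ 2 ∂π

/-- Squared 2-Wasserstein distance. -/
def W2sq {E : Type*} [NormedAddCommGroup E] [MeasurableSpace E] (μ ν : Measure E) : ℝ :=
  sInf (tCost '' Coupling μ ν)

/-- 2-Wasserstein distance. -/
def W2 {E : Type*} [NormedAddCommGroup E] [MeasurableSpace E] (μ ν : Measure E) : ℝ :=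
  Real.sqrt (W2sq μ ν)

/-- Optimal transport plans for the quadratic cost. -/
def OptPlan {E : Type*} [NormedAddCommGroup E] [MeasurableSpace E]
    (μ ν : Measure E) : Set (Measure (E × E)) :=
  {π | π ∈ Coupling μ ν ∧ tCost π = W2sq μ ν}

/-- `Gamma ν μ1 μ2` : probability measures on `E × E × E` whose (1,2)-marginal is an optimal
plan between `ν` and `μ1` and whose (1,3)-marginal is an optimal plan between `ν` and `μ2`. -/
def Gamma {E : Type*} [NormedAddCommGroup E] [MeasurableSpace E]
    (ν μ1 μ2 : Measure E) : Set (Measure (E × E × E)) :=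
  {ρ | IsProbabilityMeasure ρ ∧
    ρ.map (fun p => (p.1, p.2.1)) ∈ OptPlan ν μ1 ∧
    ρ.map (fun p => (p.1, p.2.2)) ∈ OptPlan ν μ2}

/-- Cost `∫ ‖x1 − x2‖² dρ(y, x1, x2)` of a 3-plan. -/
def pivotCost {E : Type*} [NormedAddCommGroup E] [MeasurableSpace E]
    (ρ : Measure (E × E × E)) : ℝ :=
  ∫ p, ‖p.2.1 - p.2.2‖ ^ 2 ∂ρ

/-- Squared ν-based Wasserstein discrepancy. -/
def Wnusq {E : Type*} [NormedAddCommGroup E] [MeasurableSpace E]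
    (ν μ1 μ2 : Measure E) : ℝ :=
  sInf (pivotCost '' Gamma ν μ1 μ2)

/-- ν-based Wasserstein discrepancy. -/
def Wnu {E : Type*} [NormedAddCommGroup E] [MeasurableSpace E]
    (ν μ1 μ2 : Measure E) : ℝ :=
  Real.sqrt (Wnusq ν μ1 μ2)

/-- Weak convergence of a sequence of measures (against bounded continuous functions). -/
def WeakConv {E : Type*} [MeasurableSpace E] [TopologicalSpace E]
    (μs : ℕ → Measure E) (μ : Measure E) : Prop :=
  ∀ f : BoundedContinuousFunction E ℝ,
    Tendsto (fun n => ∫ x, f x ∂(μs n)) atTop (𝓝 (∫ x, f x ∂μ))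

/-- Quantile function (pseudo-inverse c.d.f.) of a measure on ℝ. -/
def quantile (ν : Measure ℝ) (t : ℝ) : ℝ :=
  sInf {s : ℝ | ENNReal.ofReal t ≤ ν (Set.Iic s)}

/-- Pushforward of `μ` by the projection `P_θ : x ↦ ⟪θ, x⟫`. -/
def projLine {d : ℕ} (θ : Euc d) (μ : Measure (Euc d)) : Measure ℝ :=
  μ.map (fun x => ⟪θ, x⟫)

/-- `μ_θ[μ1, μ2]` : the (unique) Wasserstein mean of `Q_θ#μ1` and `Q_θ#μ2`, given by the
explicit quantile formula `[(½ F_{ν1}^{[-1]} + ½ F_{ν2}^{[-1]})·θ]#L_{[0,1]}`. -/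
def pivotMiddle {d : ℕ} (θ : Euc d) (μ1 μ2 : Measure (Euc d)) : Measure (Euc d) :=
  (volume.restrict (Set.Icc (0 : ℝ) 1)).map
    (fun t => ((1 / 2) * quantile (projLine θ μ1) t
      + (1 / 2) * quantile (projLine θ μ2) t) • θ)

/-- Squared Pivot Sliced discrepancy. -/
def PSsq {d : ℕ} (θ : Euc d) (μ1 μ2 : Measure (Euc d)) : ℝ :=
  Wnusq (pivotMiddle θ μ1 μ2) μ1 μ2

/-- Pivot Sliced discrepancy. -/
def PS {d : ℕ} (θ : Euc d) (μ1 μ2 : Measure (Euc d)) : ℝ :=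
  Real.sqrt (PSsq θ μ1 μ2)

/-- `π_θ[μ1, μ2]` : the unique optimal 1D plan between `P_θ#μ1` and `P_θ#μ2`
(co-monotone quantile coupling). -/
def piTheta {d : ℕ} (θ : Euc d) (μ1 μ2 : Measure (Euc d)) : Measure (ℝ × ℝ) :=
  (volume.restrict (Set.Icc (0 : ℝ) 1)).map
    (fun t => (quantile (projLine θ μ1) t, quantile (projLine θ μ2) t))

/-- `Ω_θ(μ1, μ2)` : couplings of `μ1, μ2` whose projection by `(P_θ, P_θ)` is `π_θ[μ1, μ2]`. -/
def OmegaTheta {d : ℕ} (θ : Euc d) (μ1 μ2 : Measure (Euc d)) :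
    Set (Measure (Euc d × Euc d)) :=
  {ω | ω ∈ Coupling μ1 μ2 ∧
    ω.map (fun p => (⟪θ, p.1⟫, ⟪θ, p.2⟫)) = piTheta θ μ1 μ2}

/-- Squared constrained Wasserstein discrepancy `CW_θ²`. -/
def CWsq {d : ℕ} (θ : Euc d) (μ1 μ2 : Measure (Euc d)) : ℝ :=
  sInf (tCost '' OmegaTheta θ μ1 μ2)

/-- Wasserstein means: minimisers of `μ ↦ W₂²(μ1, μ) + W₂²(μ, μ2)` over `P2`. -/
def WMean {d : ℕ} (μ1 μ2 : Measure (Euc d)) : Set (Measure (Euc d)) :=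
  {μ | μ ∈ (P2 : Set (Measure (Euc d))) ∧
    ∀ μ' ∈ (P2 : Set (Measure (Euc d))),
      W2sq μ1 μ + W2sq μ μ2 ≤ W2sq μ1 μ' + W2sq μ' μ2}

/-- Uniform empirical measure `1/n ∑ δ_{x_i}`. -/
def empMeasure {d n : ℕ} (x : Fin n → Euc d) : Measure (Euc d) :=
  (n : ℝ≥0∞)⁻¹ • ∑ i, Measure.dirac (x i)

/-! Choose a coupling `π` of two measures on `ℝ`. Since `(x - y)²` is twice the area of the set of
points `q` such that the quadrant at `q` lying off the diagonal contains `(x, y)`, the cost of `π`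
is twice the Lebesgue integral of the `π`-mass of these quadrants. By the marginal constraints that
mass is a decreasing affine function of the joint distribution function `q ↦ π (Iic q)`, which is
bounded by `min (α (Iic q.1)) (β (Iic q.2))`, with equality for the quantile coupling. Hence the
quantile coupling is optimal, and an optimal plan has almost everywhere, hence everywhere, the same
joint distribution function.

If `ν` lives on `ℝθ`, Pythagoras' theorem shows that the cost of a coupling of `ν` and `μ` differs
from that of its projection to `ℝ × ℝ` by a constant, and every coupling of the projections lifts
by disintegration, so the problem reduces to the one-dimensional one. -/

section Couplings

variable {X Y Z W : Type*} [MeasurableSpace X] [MeasurableSpace Y] [MeasurableSpace Z]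
  [MeasurableSpace W]

lemma prod_mem_coupling (μ : Measure X) (ν : Measure Y) [IsProbabilityMeasure μ]
    [IsProbabilityMeasure ν] : μ.prod ν ∈ Coupling μ ν :=
  ⟨inferInstance, measurePreserving_fst.map_eq, measurePreserving_snd.map_eq⟩

lemma map_prodMap_mem_coupling {μ : Measure X} {ν : Measure Y} {π : Measure (X × Y)}
    (hπ : π ∈ Coupling μ ν) {f : X → Z} {g : Y → W} (hf : Measurable f) (hg : Measurable g) :
    π.map (Prod.map f g) ∈ Coupling (μ.map f) (ν.map g) := by
  obtain ⟨_, rfl, rfl⟩ := hπ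
  have hfg : Measurable (Prod.map f g) := hf.prodMap hg
  refine ⟨Measure.isProbabilityMeasure_map hfg.aemeasurable, ?_, ?_⟩
  · rw [Measure.map_map measurable_fst hfg, Measure.map_map hf measurable_fst, Prod.map_fst']
  · rw [Measure.map_map measurable_snd hfg, Measure.map_map hg measurable_snd, Prod.map_snd']

lemma map_prodMap_id_compProd_comap (μ : Measure X) [SFinite μ] {f : X → Y} (hf : Measurable f)
    (κ : Kernel Y Z) [IsSFiniteKernel κ] :
    (μ ⊗ₘ κ.comap f hf).map (Prod.map f id) = μ.map f ⊗ₘ κ := by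
  ext s hs
  have hfid : Measurable (Prod.map f (id : Z → Z)) := hf.prodMap measurable_id
  rw [Measure.map_apply hfid hs, Measure.compProd_apply (hfid hs), Measure.compProd_apply hs,
    lintegral_map (Kernel.measurable_kernel_prodMk_left hs) hf]
  rfl

lemma exists_mem_coupling_map_prodMap_id_eq [StandardBorelSpace Z] [Nonempty Z] {μ : Measure X}
    [IsProbabilityMeasure μ] {ζ : Measure Z} {f : X → Y} (hf : Measurable f) {κ : Measure (Z × Y)}
    (hκ : κ ∈ Coupling ζ (μ.map f)) :
    ∃ ρ ∈ Coupling ζ μ, ρ.map (Prod.map id f) = κ := by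
  obtain ⟨_, hκ_fst, hκ_snd⟩ := hκ
  set κ' : Measure (Y × Z) := κ.map Prod.swap with hκ'
  have hκ'_fst : κ'.fst = μ.map f := by rw [Measure.fst_map_swap]; exact hκ_snd
  set ρ : Measure (X × Z) := μ ⊗ₘ κ'.condKernel.comap f hf
  have hρ_map : (ρ.map Prod.swap).map (Prod.map id f) = κ := by
    calc (ρ.map Prod.swap).map (Prod.map id f)
        = (ρ.map (Prod.map f id)).map Prod.swap := by
          rw [Measure.map_map (by fun_prop) (by fun_prop),
            Measure.map_map (by fun_prop) (by fun_prop)]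
          rfl
      _ = κ'.map Prod.swap := by
          rw [map_prodMap_id_compProd_comap, ← hκ'_fst, Measure.disintegrate]
      _ = κ := by
          rw [hκ', Measure.map_map measurable_swap measurable_swap, Prod.swap_swap_eq,
            Measure.map_id]
  refine ⟨ρ.map Prod.swap, ⟨Measure.isProbabilityMeasure_map (by fun_prop), ?_, ?_⟩, hρ_map⟩
  · have hfst := congr(Measure.map Prod.fst $hρ_map)
    rwa [Measure.map_map measurable_fst (by fun_prop), Prod.map_fst', Function.id_comp,
      hκ_fst] at hfst
  · exact Measure.snd_map_swap.trans (Measure.fst_compProd μ _)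

end Couplings

section TransportCost

variable {E : Type*} [NormedAddCommGroup E] [MeasurableSpace E] {μ ν : Measure E}

lemma tCost_nonneg (π : Measure (E × E)) : 0 ≤ tCost π :=
  integral_nonneg fun p => sq_nonneg ‖p.1 - p.2‖

lemma W2sq_le_tCost {π : Measure (E × E)} (hπ : π ∈ Coupling μ ν) : W2sq μ ν ≤ tCost π :=
  csInf_le ⟨0, Set.forall_mem_image.2 fun π _ => tCost_nonneg π⟩ ⟨π, hπ, rfl⟩

lemma optPlan_eq_singleton {κ : Measure (E × E)} (hκ : κ ∈ Coupling μ ν)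
    (hlt : ∀ π ∈ Coupling μ ν, π ≠ κ → tCost κ < tCost π) : OptPlan μ ν = {κ} := by
  have hκ_min : ∀ π ∈ Coupling μ ν, tCost κ ≤ tCost π := fun π hπ => by
    rcases eq_or_ne π κ with rfl | hne
    exacts [le_rfl, (hlt π hπ hne).le]
  have hW : W2sq μ ν = tCost κ :=
    (W2sq_le_tCost hκ).antisymm (le_csInf ⟨_, κ, hκ, rfl⟩ (Set.forall_mem_image.2 hκ_min))
  ext π
  refine ⟨fun ⟨hπ, hcost⟩ => ?_, ?_⟩
  · by_contra hne
    exact (hlt π hπ hne).ne' (hcost.trans hW)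
  · rintro rfl
    exact ⟨hκ, hW.symm⟩

section Transfer

variable {F : Type*} [NormedAddCommGroup F] [MeasurableSpace F] [IsProbabilityMeasure μ]
  [IsProbabilityMeasure ν] {T : E → F} {c : ℝ}

lemma W2sq_eq_W2sq_map_add (hT : Measurable T)
    (hlift : ∀ κ ∈ Coupling (μ.map T) (ν.map T), ∃ γ ∈ Coupling μ ν, γ.map (Prod.map T T) = κ)
    (hcost : ∀ γ ∈ Coupling μ ν, tCost γ = tCost (γ.map (Prod.map T T)) + c) :
    W2sq μ ν = W2sq (μ.map T) (ν.map T) + c := by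
  have hγ := prod_mem_coupling μ ν
  refine le_antisymm ?_ ?_
  · rw [← sub_le_iff_le_add]
    refine le_csInf ⟨_, _, map_prodMap_mem_coupling hγ hT hT, rfl⟩ (Set.forall_mem_image.2 ?_)
    intro κ hκ
    obtain ⟨γ, hγ, rfl⟩ := hlift κ hκ
    rw [sub_le_iff_le_add, ← hcost γ hγ]
    exact W2sq_le_tCost hγ
  · refine le_csInf ⟨_, _, hγ, rfl⟩ (Set.forall_mem_image.2 fun γ hγ => ?_)
    rw [hcost γ hγ]
    gcongr
    exact W2sq_le_tCost (map_prodMap_mem_coupling hγ hT hT)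

lemma optPlan_eq_setOf_map_mem_optPlan (hT : Measurable T)
    (hlift : ∀ κ ∈ Coupling (μ.map T) (ν.map T), ∃ γ ∈ Coupling μ ν, γ.map (Prod.map T T) = κ)
    (hcost : ∀ γ ∈ Coupling μ ν, tCost γ = tCost (γ.map (Prod.map T T)) + c) :
    OptPlan μ ν =
      {γ | γ ∈ Coupling μ ν ∧ γ.map (Prod.map T T) ∈ OptPlan (μ.map T) (ν.map T)} := by
  ext γ
  refine and_congr_right fun hγ => ?_
  rw [OptPlan, Set.mem_ofPred_eq, and_iff_right (map_prodMap_mem_coupling hγ hT hT), hcost γ hγ,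
    W2sq_eq_W2sq_map_add hT hlift hcost, add_left_inj]

end Transfer

end TransportCost

section SecondMoment

variable {E : Type*} [NormedAddCommGroup E] [MeasurableSpace E] [BorelSpace E]
  [SecondCountableTopology E] {μ ν : Measure E}

lemma mem_P2_iff_memLp_id : μ ∈ P2 ↔ IsProbabilityMeasure μ ∧ MemLp id 2 μ :=
  and_congr_right fun _ => (memLp_two_iff_integrable_sq_norm (by fun_prop)).symm

lemma memLp_sub_of_mem_coupling (hμ : μ ∈ P2) (hν : ν ∈ P2) {π : Measure (E × E)}
    (hπ : π ∈ Coupling μ ν) : MemLp (fun p : E × E => p.1 - p.2) 2 π := by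
  obtain ⟨_, rfl, rfl⟩ := hπ
  exact ((mem_P2_iff_memLp_id.1 hμ).2.comp_of_map measurable_fst.aemeasurable).sub
    ((mem_P2_iff_memLp_id.1 hν).2.comp_of_map measurable_snd.aemeasurable)

lemma ofReal_tCost (hμ : μ ∈ P2) (hν : ν ∈ P2) {π : Measure (E × E)} (hπ : π ∈ Coupling μ ν) :
    ENNReal.ofReal (tCost π) = ∫⁻ p, ENNReal.ofReal (‖p.1 - p.2‖ ^ 2) ∂π :=
  ofReal_integral_eq_lintegral_ofReal
    ((memLp_sub_of_mem_coupling hμ hν hπ).integrable_norm_pow two_ne_zero)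
    (Eventually.of_forall fun _ => sq_nonneg _)

end SecondMoment

section JointDistributionFunction

lemma ext_of_Iic_prod {α β : Type*} [TopologicalSpace α] [MeasurableSpace α]
    [SecondCountableTopology α] [LinearOrder α] [OrderTopology α] [BorelSpace α]
    [TopologicalSpace β] [MeasurableSpace β] [SecondCountableTopology β] [LinearOrder β]
    [OrderTopology β] [BorelSpace β] {μ ν : Measure (α × β)} [IsFiniteMeasure μ]
    (h : ∀ q, μ (Set.Iic q) = ν (Set.Iic q)) : μ = ν := by
  have h_prod_Iic {s : Set α} (hs : MeasurableSet s) (b : β) :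
      μ (s ×ˢ Set.Iic b) = ν (s ×ˢ Set.Iic b) := by
    have hfst : (μ.restrict (Prod.snd ⁻¹' Set.Iic b)).fst =
        (ν.restrict (Prod.snd ⁻¹' Set.Iic b)).fst := by
      refine Measure.ext_of_Iic _ _ fun a => ?_
      simpa only [Measure.fst_apply measurableSet_Iic, ← Set.prod_eq, Set.Iic_prod_Iic,
        Measure.restrict_apply (measurable_fst measurableSet_Iic)] using h (a, b)
    simpa only [Measure.fst_apply hs, Measure.restrict_apply (measurable_fst hs), ← Set.prod_eq]
      using congr($hfst s)
  refine Measure.ext_prod fun {s t} hs ht => ?_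
  have hsnd : (μ.restrict (Prod.fst ⁻¹' s)).snd = (ν.restrict (Prod.fst ⁻¹' s)).snd := by
    refine Measure.ext_of_Iic _ _ fun b => ?_
    simpa only [Measure.snd_apply measurableSet_Iic, Set.inter_comm (Prod.snd ⁻¹' _),
      Measure.restrict_apply (measurable_snd measurableSet_Iic), ← Set.prod_eq]
      using h_prod_Iic hs b
  simpa only [Measure.snd_apply ht, Measure.restrict_apply (measurable_snd ht),
    Set.inter_comm (Prod.snd ⁻¹' _), ← Set.prod_eq] using congr($hsnd t)

lemma tendsto_measure_Iic_add (μ : Measure (ℝ × ℝ)) [IsFiniteMeasure μ] (q : ℝ × ℝ) :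
    Tendsto (fun r : ℝ => μ (Set.Iic (q + (r, r)))) (𝓝[>] 0) (𝓝 (μ (Set.Iic q))) := by
  have hInter : ⋂ r > (0 : ℝ), Set.Iic (q + (r, r)) = Set.Iic q := by
    ext p
    simp only [Set.mem_iInter, Set.mem_Iic, Prod.le_def, Prod.fst_add, Prod.snd_add]
    exact ⟨fun h => ⟨le_of_forall_pos_le_add fun r hr => (h r hr).1,
      le_of_forall_pos_le_add fun r hr => (h r hr).2⟩,
      fun h r hr => ⟨by linarith [h.1], by linarith [h.2]⟩⟩
  rw [← hInter]
  exact tendsto_measure_biInter_gt (fun _ _ => measurableSet_Iic.nullMeasurableSet)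
    (fun r s _ hrs => Set.Iic_subset_Iic.2 (by gcongr))
    ⟨1, one_pos, measure_ne_top _ _⟩

lemma measure_Iic_le_of_ae_le {μ ν : Measure (ℝ × ℝ)} [IsFiniteMeasure ν]
    (h : ∀ᵐ q, μ (Set.Iic q) ≤ ν (Set.Iic q)) (q : ℝ × ℝ) : μ (Set.Iic q) ≤ ν (Set.Iic q) := by
  refine ge_of_tendsto (tendsto_measure_Iic_add ν q) ?_
  filter_upwards [self_mem_nhdsWithin] with r (hr : 0 < r)
  have hvol : volume (Set.Icc q (q + (r, r))) ≠ 0 := by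
    rw [Set.Icc_prod_eq, Measure.volume_eq_prod, Measure.prod_prod]
    simpa using hr
  obtain ⟨p, ⟨hqp, hpr⟩, hp⟩ := ((frequently_ae_mem_iff.2 hvol).and_eventually h).exists
  calc μ (Set.Iic q) ≤ μ (Set.Iic p) := measure_mono (Set.Iic_subset_Iic.2 hqp)
    _ ≤ ν (Set.Iic p) := hp
    _ ≤ ν (Set.Iic (q + (r, r))) := measure_mono (Set.Iic_subset_Iic.2 hpr)

lemma ext_of_ae_Iic_prod {μ ν : Measure (ℝ × ℝ)} [IsFiniteMeasure μ] [IsFiniteMeasure ν]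
    (h : ∀ᵐ q, μ (Set.Iic q) = ν (Set.Iic q)) : μ = ν :=
  ext_of_Iic_prod fun q => (measure_Iic_le_of_ae_le (h.mono fun _ => Eq.le) q).antisymm
    (measure_Iic_le_of_ae_le (h.mono fun _ => Eq.ge) q)

lemma measure_Iic_le_min_of_mem_coupling {α β : Measure ℝ} {π : Measure (ℝ × ℝ)}
    (hπ : π ∈ Coupling α β) (q : ℝ × ℝ) :
    π (Set.Iic q) ≤ min (α (Set.Iic q.1)) (β (Set.Iic q.2)) := by
  obtain ⟨_, rfl, rfl⟩ := hπ
  rw [Measure.map_apply measurable_fst measurableSet_Iic,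
    Measure.map_apply measurable_snd measurableSet_Iic]
  exact le_min (measure_mono fun _ hp => hp.1) (measure_mono fun _ hp => hp.2)

end JointDistributionFunction

section OffDiagQuadrant

/-- The upper-left quadrant at `q` if `q` is on or above the diagonal of `ℝ × ℝ`, the lower-right
one otherwise. In both cases it is disjoint from the diagonal. The sides containing their boundary
are chosen so that its complement in a half-plane is `Set.Iic q`. -/
def offDiagQuadrant (q : ℝ × ℝ) : Set (ℝ × ℝ) :=
  if q.1 ≤ q.2 then Set.Iic q.1 ×ˢ Set.Ioi q.2 else Set.Ioi q.1 ×ˢ Set.Iic q.2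

lemma mem_offDiagQuadrant {p q : ℝ × ℝ} : p ∈ offDiagQuadrant q ↔
    (p.1 ≤ q.1 ∧ q.1 ≤ q.2 ∧ q.2 < p.2) ∨ (p.2 ≤ q.2 ∧ q.2 < q.1 ∧ q.1 < p.1) := by
  unfold offDiagQuadrant
  split_ifs with h <;> simp only [Set.mem_prod, Set.mem_Iic, Set.mem_Ioi] <;> grind

lemma measurableSet_setOf_mem_offDiagQuadrant :
    MeasurableSet {z : (ℝ × ℝ) × (ℝ × ℝ) | z.1 ∈ offDiagQuadrant z.2} := by
  simp only [mem_offDiagQuadrant]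
  measurability

lemma volume_setOf_mem_offDiagQuadrant_slice (p : ℝ × ℝ) {a : ℝ} (ha : a ≠ p.1) :
    volume {b | p ∈ offDiagQuadrant (a, b)} =
      (Set.uIoc p.2 p.1).indicator (fun a => ENNReal.ofReal |a - p.2|) a := by
  have hslice : {b | p ∈ offDiagQuadrant (a, b)} =
      if p.1 < a then Set.Ico a p.2 else Set.Ico p.2 a := by
    ext b
    simp only [mem_offDiagQuadrant, Set.mem_ofPred_eq]
    split_ifs <;> simp only [Set.mem_Ico] <;> grind
  simp only [hslice, Set.indicator_apply, Set.mem_uIoc]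
  split_ifs with hpa hmem hmem <;> rw [Real.volume_Ico]
  · rw [abs_of_nonpos (by grind), neg_sub]
  · exact ENNReal.ofReal_eq_zero.2 (by grind)
  · rw [abs_of_nonneg (by grind)]
  · exact ENNReal.ofReal_eq_zero.2 (by grind)

lemma two_mul_volume_setOf_mem_offDiagQuadrant (p : ℝ × ℝ) :
    2 * volume {q | p ∈ offDiagQuadrant q} = ENNReal.ofReal ((p.1 - p.2) ^ 2) := by
  have hmeas : MeasurableSet {q | p ∈ offDiagQuadrant q} :=
    measurable_prodMk_left measurableSet_setOf_mem_offDiagQuadrant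
  have hcont : Continuous fun a : ℝ => |a - p.2| := by fun_prop
  have harea : volume {q | p ∈ offDiagQuadrant q} = ENNReal.ofReal ((p.1 - p.2) ^ 2 / 2) := by
    calc volume {q | p ∈ offDiagQuadrant q}
        = ∫⁻ a, volume {b | p ∈ offDiagQuadrant (a, b)} := Measure.prod_apply hmeas
      _ = ∫⁻ a in Set.uIoc p.2 p.1, ENNReal.ofReal |a - p.2| := by
          rw [← lintegral_indicator measurableSet_uIoc]
          refine lintegral_congr_ae ?_
          filter_upwards [volume.ae_ne p.1] with a ha
          exact volume_setOf_mem_offDiagQuadrant_slice p ha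
      _ = ENNReal.ofReal (∫ a in Set.uIoc p.2 p.1, |a - p.2| ^ 1) := by
          simp only [pow_one]
          refine (ofReal_integral_eq_lintegral_ofReal ?_
            (Eventually.of_forall fun _ => abs_nonneg _)).symm
          exact intervalIntegrable_iff.1 (hcont.intervalIntegrable _ _)
      _ = ENNReal.ofReal ((p.1 - p.2) ^ 2 / 2) := by
          rw [integral_pow_abs_sub_uIoc]
          norm_num [sq_abs]
  rw [harea, ← ENNReal.ofReal_ofNat 2, ← ENNReal.ofReal_mul zero_le_two]
  congr 1
  ring

lemma lintegral_sq_sub_eq_two_mul_lintegral_offDiagQuadrant (π : Measure (ℝ × ℝ)) [SFinite π] :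
    ∫⁻ p, ENNReal.ofReal ((p.1 - p.2) ^ 2) ∂π = 2 * ∫⁻ q, π (offDiagQuadrant q) := by
  have hmeas := measurableSet_setOf_mem_offDiagQuadrant
  calc ∫⁻ p, ENNReal.ofReal ((p.1 - p.2) ^ 2) ∂π
      = 2 * ∫⁻ p, volume {q | p ∈ offDiagQuadrant q} ∂π := by
        simp only [← two_mul_volume_setOf_mem_offDiagQuadrant]
        exact lintegral_const_mul _ (measurable_measure_prodMk_left hmeas)
    _ = 2 * π.prod volume {z | z.1 ∈ offDiagQuadrant z.2} := by
        rw [Measure.prod_apply hmeas]; rfl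
    _ = 2 * ∫⁻ q, π (offDiagQuadrant q) := by
        rw [Measure.prod_apply_symm hmeas]; rfl

lemma measurable_measure_offDiagQuadrant (π : Measure (ℝ × ℝ)) [SFinite π] :
    Measurable fun q => π (offDiagQuadrant q) :=
  measurable_measure_prodMk_right measurableSet_setOf_mem_offDiagQuadrant

lemma measure_Iic_add_measure_offDiagQuadrant {α β : Measure ℝ} {π : Measure (ℝ × ℝ)}
    (hπ : π ∈ Coupling α β) (q : ℝ × ℝ) :
    π (Set.Iic q) + π (offDiagQuadrant q) =
      if q.1 ≤ q.2 then α (Set.Iic q.1) else β (Set.Iic q.2) := by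
  obtain ⟨_, rfl, rfl⟩ := hπ
  unfold offDiagQuadrant
  split_ifs
  · rw [Measure.map_apply measurable_fst measurableSet_Iic, ← Set.compl_Iic]
    exact measure_inter_add_sdiff _ (measurable_snd measurableSet_Iic)
  · rw [Measure.map_apply measurable_snd measurableSet_Iic, ← Set.compl_Iic, Set.prod_eq,
      Set.inter_comm, ← Set.Iic_prod_Iic, Set.prod_eq, Set.inter_comm]
    exact measure_inter_add_sdiff _ (measurable_fst measurableSet_Iic)

section Comparison

variable {α β : Measure ℝ} {π κ : Measure (ℝ × ℝ)}

lemma measure_offDiagQuadrant_le (hπ : π ∈ Coupling α β) (hκ : κ ∈ Coupling α β) {q : ℝ × ℝ}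
    (h : π (Set.Iic q) ≤ κ (Set.Iic q)) : κ (offDiagQuadrant q) ≤ π (offDiagQuadrant q) := by
  have := hκ.1
  have hsum := (measure_Iic_add_measure_offDiagQuadrant hπ q).trans
    (measure_Iic_add_measure_offDiagQuadrant hκ q).symm
  refine (ENNReal.add_le_add_iff_left (measure_ne_top κ (Set.Iic q))).1 ?_
  rw [← hsum]
  gcongr

lemma measure_Iic_eq_of_measure_offDiagQuadrant_eq (hπ : π ∈ Coupling α β)
    (hκ : κ ∈ Coupling α β) {q : ℝ × ℝ} (h : κ (offDiagQuadrant q) = π (offDiagQuadrant q)) :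
    π (Set.Iic q) = κ (Set.Iic q) := by
  have := hπ.1
  have hsum := (measure_Iic_add_measure_offDiagQuadrant hπ q).trans
    (measure_Iic_add_measure_offDiagQuadrant hκ q).symm
  rw [h] at hsum
  exact (ENNReal.add_left_inj (measure_ne_top _ _)).1 hsum

lemma tCost_lt_tCost_of_measure_Iic_le (hα : α ∈ P2) (hβ : β ∈ P2) (hπ : π ∈ Coupling α β)
    (hκ : κ ∈ Coupling α β) (hle : ∀ q, π (Set.Iic q) ≤ κ (Set.Iic q)) (hne : π ≠ κ) :
    tCost κ < tCost π := by
  have := hπ.1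
  have := hκ.1
  have hcost {ρ : Measure (ℝ × ℝ)} [SFinite ρ] (hρ : ρ ∈ Coupling α β) :
      ENNReal.ofReal (tCost ρ) = 2 * ∫⁻ q, ρ (offDiagQuadrant q) := by
    simp only [ofReal_tCost hα hβ hρ, Real.norm_eq_abs, sq_abs,
      lintegral_sq_sub_eq_two_mul_lintegral_offDiagQuadrant]
  by_contra! hcost_le
  rw [← ENNReal.ofReal_le_ofReal_iff (tCost_nonneg κ), hcost hπ, hcost hκ,
    ENNReal.mul_le_mul_iff_right two_ne_zero ENNReal.ofNat_ne_top] at hcost_le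
  have hfin : ∫⁻ q, κ (offDiagQuadrant q) ≠ ∞ := fun htop => by
    simpa [htop] using hcost hκ
  have hae := ae_eq_of_ae_le_of_lintegral_le
    (Eventually.of_forall fun q => measure_offDiagQuadrant_le hπ hκ (hle q)) hfin
    (measurable_measure_offDiagQuadrant π).aemeasurable hcost_le
  exact hne (ext_of_ae_Iic_prod
    (hae.mono fun _ => measure_Iic_eq_of_measure_offDiagQuadrant_eq hπ hκ))

end Comparison

end OffDiagQuadrant

section QuantileCoupling

/-- The comonotone coupling of `α` and `β`: the joint law of their quantile functions under the
Lebesgue measure of `[0, 1]`. -/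
def quantileCoupling (α β : Measure ℝ) : Measure (ℝ × ℝ) :=
  (volume.restrict (Set.Icc (0 : ℝ) 1)).map fun t => (quantile α t, quantile β t)

variable (α β : Measure ℝ) [IsProbabilityMeasure α] [IsProbabilityMeasure β]

lemma quantile_le_iff {t : ℝ} (ht : t ∈ Set.Ioo (0 : ℝ) 1) (s : ℝ) :
    quantile α t ≤ s ↔ t ≤ cdf α s := by
  have hquantile : quantile α t = sInf {s | t ≤ cdf α s} := by
    simp only [quantile, ← ofReal_cdf, ENNReal.ofReal_le_ofReal_iff (cdf_nonneg α _)]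
  have hne : {s | t ≤ cdf α s}.Nonempty :=
    ((tendsto_cdf_atTop α).eventually_const_le ht.2).exists
  have hbdd : BddBelow {s | t ≤ cdf α s} := by
    obtain ⟨r, hr⟩ := ((tendsto_cdf_atBot α).eventually_lt_const ht.1).exists
    exact ⟨r, fun s hs => ((monotone_cdf α).reflect_lt (hr.trans_le hs)).le⟩
  have hmem : t ≤ cdf α (sInf {s | t ≤ cdf α s}) := by
    rw [← (cdf α).iInf_Ioi_eq]
    refine le_ciInf fun ⟨r, hr⟩ => ?_
    obtain ⟨s, hs, hsr⟩ := exists_lt_of_csInf_lt hne hr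
    exact hs.trans (monotone_cdf α hsr.le)
  rw [hquantile]
  exact ⟨fun h => hmem.trans (monotone_cdf α h), fun h => csInf_le hbdd h⟩

lemma aemeasurable_quantile : AEMeasurable (quantile α) (volume.restrict (Set.Ioo (0 : ℝ) 1)) :=
  aemeasurable_restrict_of_monotoneOn measurableSet_Ioo fun _ hs _ ht hst =>
    (quantile_le_iff α hs _).2 (hst.trans ((quantile_le_iff α ht _).1 le_rfl))

lemma volume_Iic_inter_Ioo_zero_one {c : ℝ} (hc : c ≤ 1) :
    volume (Set.Iic c ∩ Set.Ioo 0 1) = ENNReal.ofReal c := by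
  rw [measure_congr ((ae_eq_refl _).inter Ioo_ae_eq_Ioc), Set.Iic_inter_Ioc_of_le hc,
    Real.volume_Ioc, sub_zero]

lemma map_quantile_restrict_Ioo : (volume.restrict (Set.Ioo (0 : ℝ) 1)).map (quantile α) = α := by
  refine (Measure.ext_of_Iic _ _ fun s => ?_).symm
  have hpre : quantile α ⁻¹' Set.Iic s ∩ Set.Ioo 0 1 = Set.Iic (cdf α s) ∩ Set.Ioo 0 1 := by
    ext t
    exact and_congr_left fun ht => quantile_le_iff α ht s
  rw [Measure.map_apply_of_aemeasurable (aemeasurable_quantile α) measurableSet_Iic,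
    Measure.restrict_apply' measurableSet_Ioo, hpre,
    volume_Iic_inter_Ioo_zero_one (cdf_le_one α s), ofReal_cdf]

-- At the endpoints `quantile` may take the junk value `0` of a set without infimum.
lemma quantileCoupling_eq_map_restrict_Ioo (α β : Measure ℝ) : quantileCoupling α β =
    (volume.restrict (Set.Ioo (0 : ℝ) 1)).map fun t => (quantile α t, quantile β t) := by
  rw [quantileCoupling, Measure.restrict_congr_set Ioo_ae_eq_Icc]

lemma quantileCoupling_mem_coupling : quantileCoupling α β ∈ Coupling α β := by
  rw [quantileCoupling_eq_map_restrict_Ioo]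
  have : IsProbabilityMeasure (volume.restrict (Set.Ioo (0 : ℝ) 1)) := ⟨by simp⟩
  exact ⟨Measure.isProbabilityMeasure_map
      ((aemeasurable_quantile α).prodMk (aemeasurable_quantile β)),
    (Measure.fst_map_prodMk₀ (aemeasurable_quantile β)).trans (map_quantile_restrict_Ioo α),
    (Measure.snd_map_prodMk₀ (aemeasurable_quantile α)).trans (map_quantile_restrict_Ioo β)⟩

lemma quantileCoupling_Iic (q : ℝ × ℝ) :
    quantileCoupling α β (Set.Iic q) = min (α (Set.Iic q.1)) (β (Set.Iic q.2)) := by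
  have hpre : (fun t => (quantile α t, quantile β t)) ⁻¹' Set.Iic q ∩ Set.Ioo 0 1 =
      Set.Iic (min (cdf α q.1) (cdf β q.2)) ∩ Set.Ioo 0 1 := by
    ext t
    refine and_congr_left fun ht => ?_
    rw [Set.mem_Iic, le_min_iff, ← quantile_le_iff α ht, ← quantile_le_iff β ht]
    rfl
  rw [quantileCoupling_eq_map_restrict_Ioo, Measure.map_apply_of_aemeasurable
      ((aemeasurable_quantile α).prodMk (aemeasurable_quantile β)) measurableSet_Iic,
    Measure.restrict_apply' measurableSet_Ioo, hpre,
    volume_Iic_inter_Ioo_zero_one (min_le_of_left_le (cdf_le_one α _)), ENNReal.ofReal_min,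
    ofReal_cdf, ofReal_cdf]

lemma optPlan_eq_singleton_quantileCoupling {α β : Measure ℝ} (hα : α ∈ P2) (hβ : β ∈ P2) :
    OptPlan α β = {quantileCoupling α β} := by
  have := hα.1
  have := hβ.1
  have hκ := quantileCoupling_mem_coupling α β
  refine optPlan_eq_singleton hκ fun π hπ =>
    tCost_lt_tCost_of_measure_Iic_le hα hβ hπ hκ fun q => ?_
  rw [quantileCoupling_Iic]
  exact measure_Iic_le_min_of_mem_coupling hπ q

end QuantileCoupling

section Line

variable {E : Type*} [NormedAddCommGroup E] [InnerProductSpace ℝ E] {θ : E}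

lemma norm_sub_inner_smul_sq (hθ : ‖θ‖ = 1) (x : E) :
    ‖x - ⟪θ, x⟫ • θ‖ ^ 2 = ‖x‖ ^ 2 - ⟪θ, x⟫ ^ 2 := by
  rw [norm_sub_sq_real, norm_smul, inner_smul_right, hθ, real_inner_comm, mul_one,
    Real.norm_eq_abs, sq_abs]
  ring

lemma inner_smul_right_of_norm_eq_one (hθ : ‖θ‖ = 1) (r : ℝ) : ⟪θ, r • θ⟫ = r := by
  rw [inner_smul_right, real_inner_self_eq_norm_sq, hθ, one_pow, mul_one]

lemma norm_smul_sub_sq (hθ : ‖θ‖ = 1) (r : ℝ) (x : E) :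
    ‖r • θ - x‖ ^ 2 = ⟪θ, x - r • θ⟫ ^ 2 + ‖x - ⟪θ, x⟫ • θ‖ ^ 2 := by
  have hperp : x - r • θ - ⟪θ, x - r • θ⟫ • θ = x - ⟪θ, x⟫ • θ := by
    rw [inner_sub_right, inner_smul_right_of_norm_eq_one hθ, sub_smul]
    abel
  rw [norm_sub_rev, ← hperp, norm_sub_inner_smul_sq hθ, add_sub_cancel]

variable [MeasurableSpace E] [BorelSpace E] {μ ν : Measure E}

lemma tCost_map_inner (θ : E) (γ : Measure (E × E)) :
    tCost (γ.map fun p => (⟪θ, p.1⟫, ⟪θ, p.2⟫)) = ∫ p, ⟪θ, p.2 - p.1⟫ ^ 2 ∂γ := by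
  rw [tCost, integral_map (by fun_prop) (by fun_prop)]
  simp only [inner_sub_right, Real.norm_eq_abs, sq_abs, sub_sq_comm]

lemma map_smul_map_inner_of_ae_mem_line (hθ : ‖θ‖ = 1)
    (hline : ∀ᵐ y ∂ν, y ∈ Set.range fun r : ℝ => r • θ) :
    (ν.map fun y => ⟪θ, y⟫).map (fun r : ℝ => r • θ) = ν := by
  rw [Measure.map_map (by fun_prop) (by fun_prop)]
  refine (Measure.map_congr ?_).trans Measure.map_id
  filter_upwards [hline]
  rintro _ ⟨r, rfl⟩
  simp only [Function.comp_apply, inner_smul_right_of_norm_eq_one hθ, id_eq]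

lemma exists_mem_coupling_map_inner_eq [IsProbabilityMeasure μ] (hθ : ‖θ‖ = 1)
    (hline : ∀ᵐ y ∂ν, y ∈ Set.range fun r : ℝ => r • θ) {κ : Measure (ℝ × ℝ)}
    (hκ : κ ∈ Coupling (ν.map fun y => ⟪θ, y⟫) (μ.map fun x => ⟪θ, x⟫)) :
    ∃ γ ∈ Coupling ν μ, γ.map (fun p => (⟪θ, p.1⟫, ⟪θ, p.2⟫)) = κ := by
  obtain ⟨ρ, hρ, rfl⟩ := exists_mem_coupling_map_prodMap_id_eq (by fun_prop) hκ
  have hγ := map_prodMap_mem_coupling hρ (f := fun r : ℝ => r • θ) (by fun_prop) measurable_id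
  rw [map_smul_map_inner_of_ae_mem_line hθ hline, Measure.map_id] at hγ
  refine ⟨_, hγ, ?_⟩
  rw [Measure.map_map (by fun_prop) (by fun_prop)]
  congr 1
  ext p <;> simp [inner_smul_right_of_norm_eq_one hθ]

variable [SecondCountableTopology E]

lemma map_inner_mem_P2 (hμ : μ ∈ P2) (θ : E) : μ.map (fun x => ⟪θ, x⟫) ∈ P2 := by
  obtain ⟨_, hμ_Lp⟩ := mem_P2_iff_memLp_id.1 hμ
  exact mem_P2_iff_memLp_id.2 ⟨Measure.isProbabilityMeasure_map (by fun_prop),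
    (memLp_map_measure_iff (by fun_prop) (by fun_prop)).2 (hμ_Lp.const_inner θ)⟩

lemma integral_norm_sub_sq_eq_of_ae_mem_line (hθ : ‖θ‖ = 1) (hμ : μ ∈ P2) (hν : ν ∈ P2)
    (hline : ∀ᵐ y ∂ν, y ∈ Set.range fun r : ℝ => r • θ) {γ : Measure (E × E)}
    (hγ : γ ∈ Coupling ν μ) :
    ∫ p, ‖p.1 - p.2‖ ^ 2 ∂γ =
      ∫ p, ⟪θ, p.2 - p.1⟫ ^ 2 ∂γ + ∫ x, ‖x - ⟪θ, x⟫ • θ‖ ^ 2 ∂μ := by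
  have hint_inner : Integrable (fun p => ⟪θ, p.2 - p.1⟫ ^ 2) γ := by
    have hLp := ((memLp_sub_of_mem_coupling hν hμ hγ).neg.const_inner θ).integrable_sq
    simpa only [Pi.neg_apply, neg_sub] using hLp
  have hint_perp : Integrable (fun x => ‖x - ⟪θ, x⟫ • θ‖ ^ 2) μ := by
    simp only [norm_sub_inner_smul_sq hθ]
    exact hμ.2.sub ((mem_P2_iff_memLp_id.1 hμ).2.const_inner θ).integrable_sq
  obtain ⟨_, rfl, rfl⟩ := hγ
  have hint_perp_snd : Integrable (fun p : E × E => ‖p.2 - ⟪θ, p.2⟫ • θ‖ ^ 2) γ :=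
    hint_perp.comp_measurable measurable_snd
  rw [integral_map (by fun_prop) (by fun_prop), ← integral_add hint_inner hint_perp_snd]
  refine integral_congr_ae ?_
  filter_upwards [ae_of_ae_map measurable_fst.aemeasurable hline] with p ⟨r, hr⟩
  simp only [← hr, norm_smul_sub_sq hθ]

theorem semi_1D_ot_general (hθ : ‖θ‖ = 1) (hμ : μ ∈ P2) (hν : ν ∈ P2)
    (hsupp : ν (Set.range fun r : ℝ => r • θ)ᶜ = 0) :
    (∀ γ ∈ Coupling ν μ,
      ∫ p, ‖p.1 - p.2‖ ^ 2 ∂γ =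
        ∫ p, ⟪θ, p.2 - p.1⟫ ^ 2 ∂γ + ∫ x, ‖x - ⟪θ, x⟫ • θ‖ ^ 2 ∂μ) ∧
    W2sq ν μ = W2sq (ν.map fun y => ⟪θ, y⟫) (μ.map fun x => ⟪θ, x⟫) +
      ∫ x, ‖x - ⟪θ, x⟫ • θ‖ ^ 2 ∂μ ∧
    OptPlan ν μ = {γ | γ ∈ Coupling ν μ ∧ γ.map (fun p => (⟪θ, p.1⟫, ⟪θ, p.2⟫)) =
      quantileCoupling (ν.map fun y => ⟪θ, y⟫) (μ.map fun x => ⟪θ, x⟫)} := by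
  have := hμ.1
  have := hν.1
  have hinner : Measurable fun x : E => ⟪θ, x⟫ := by fun_prop
  have hsplit (γ) (hγ : γ ∈ Coupling ν μ) :=
    integral_norm_sub_sq_eq_of_ae_mem_line hθ hμ hν (mem_ae_iff.2 hsupp) hγ
  have hcost (γ) (hγ : γ ∈ Coupling ν μ) :
      tCost γ = tCost (γ.map (Prod.map (⟪θ, ·⟫) (⟪θ, ·⟫))) + ∫ x, ‖x - ⟪θ, x⟫ • θ‖ ^ 2 ∂μ :=
    (hsplit γ hγ).trans (congrArg (· + _) (tCost_map_inner θ γ).symm)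
  have hlift (κ) (hκ : κ ∈ Coupling (ν.map (⟪θ, ·⟫)) (μ.map (⟪θ, ·⟫))) :=
    exists_mem_coupling_map_inner_eq hθ (mem_ae_iff.2 hsupp) hκ
  refine ⟨hsplit, W2sq_eq_W2sq_map_add hinner hlift hcost, ?_⟩
  rw [optPlan_eq_setOf_map_mem_optPlan hinner hlift hcost,
    optPlan_eq_singleton_quantileCoupling (map_inner_mem_P2 hν θ) (map_inner_mem_P2 hμ θ)]
  rfl

end Line

/-- optimal transport from a measure `ν` supported on the line `ℝθ`:
cost splitting, value of `W₂²`, and characterisation of optimal plans. -/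
theorem semi_1D_ot {d : ℕ} (θ : Euc d) (hθ : ‖θ‖ = 1) (μ ν : Measure (Euc d))
    (hμ : μ ∈ (P2 : Set (Measure (Euc d)))) (hν : ν ∈ (P2 : Set (Measure (Euc d))))
    (hsupp : ν (Set.range fun r : ℝ => r • θ)ᶜ = 0) :
    (∀ γ ∈ Coupling ν μ,
      (∫ p, ‖p.1 - p.2‖ ^ 2 ∂γ)
        = (∫ p, (⟪θ, p.2 - p.1⟫) ^ 2 ∂γ) + ∫ x, ‖x - ⟪θ, x⟫ • θ‖ ^ 2 ∂μ) ∧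
    W2sq ν μ = W2sq (projLine θ ν) (projLine θ μ) + ∫ x, ‖x - ⟪θ, x⟫ • θ‖ ^ 2 ∂μ ∧
    OptPlan ν μ =
      {γ | γ ∈ Coupling ν μ ∧
        γ.map (fun p => (⟪θ, p.1⟫, ⟪θ, p.2⟫)) = piTheta θ ν μ} := by
  exact semi_1D_ot_general hθ hμ hν hsupp

end
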